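/- Let R be an integral domain and X an indeterminate. Then R is t-potent if and only if the polynomial ring R[X] is t-potent, and R is t-super potent if and only if R[X] is t-super potent. -/

import Mathlib

open FractionalIdeal

/-- The fractional ideals of `R` inside its field of fractions. -/
abbrev FracId (R : Type*) [CommRing R] : Type _ :=
  FractionalIdeal (nonZeroDivisors R) (FractionRing R)

/-- A star operation on an integral domain `R`: a map on nonzero fractional ideals satisfying
`(cA)⋆ = c·A⋆`, `R⋆ = R`, `A ⊆ A⋆`, monotonicity, and idempotence.  (The value on the zero
ideal is irrelevant.) -/
structure StarOp (R : Type*) [CommRing R] [IsDomain R] where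
  star : FracId R → FracId R
  star_smul : ∀ c : FractionRing R, c ≠ 0 → ∀ I : FracId R, I ≠ 0 →
    star (spanSingleton (nonZeroDivisors R) c * I) = spanSingleton (nonZeroDivisors R) c * star I
  star_one : star 1 = 1
  le_star : ∀ I : FracId R, I ≠ 0 → I ≤ star I
  star_mono : ∀ I J : FracId R, I ≠ 0 → J ≠ 0 → I ≤ J → star I ≤ star J
  star_idem : ∀ I : FracId R, I ≠ 0 → star (star I) = star I

namespace StarOp

variable {R : Type*} [CommRing R] [IsDomain R]

/-- A star operation has finite type if `A⋆` is the union of `J⋆` over the nonzero finitely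
generated (fractional) subideals `J` of `A`. -/
def FiniteType (s : StarOp R) : Prop :=
  ∀ I : FracId R, I ≠ 0 → ∀ x : FractionRing R, (x ∈ s.star I ↔
    ∃ J : FracId R, J ≠ 0 ∧ (J : Submodule R (FractionRing R)).FG ∧ J ≤ I ∧ x ∈ s.star J)

/-- `⋆₁ ≤ ⋆₂` : `I^⋆₁ ⊆ I^⋆₂` for every nonzero fractional ideal `I`. -/
def le (s₁ s₂ : StarOp R) : Prop := ∀ I : FracId R, I ≠ 0 → s₁.star I ≤ s₂.star I

/-- A (nonzero integral) `⋆`-ideal: an ideal with `I⋆ = I`. -/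
def IsStarIdeal (s : StarOp R) (I : Ideal R) : Prop :=
  I ≠ ⊥ ∧ s.star (I : FracId R) = (I : FracId R)

/-- A maximal `⋆`-ideal: maximal among proper integral `⋆`-ideals. -/
def IsMaxStarIdeal (s : StarOp R) (M : Ideal R) : Prop :=
  M ≠ ⊤ ∧ s.IsStarIdeal M ∧ ∀ J : Ideal R, J ≠ ⊤ → s.IsStarIdeal J → M ≤ J → J = M

/-- A nonzero ideal `I` is `⋆`-invertible if `(I·I⁻¹)⋆ = R`. -/
def IsStarInvertible (s : StarOp R) (I : Ideal R) : Prop :=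
  I ≠ ⊥ ∧ s.star ((I : FracId R) * ((1 : FracId R) / (I : FracId R))) = 1

/-- A nonzero finitely generated ideal is `⋆`-rigid if it is contained in exactly one maximal
`⋆`-ideal. -/
def IsRigid (s : StarOp R) (I : Ideal R) : Prop :=
  I ≠ ⊥ ∧ I.FG ∧ ∃! M : Ideal R, s.IsMaxStarIdeal M ∧ I ≤ M

/-- A `⋆`-rigid ideal is `⋆`-super rigid if every finitely generated ideal containing it is
`⋆`-invertible. -/
def IsSuperRigid (s : StarOp R) (I : Ideal R) : Prop :=
  s.IsRigid I ∧ ∀ J : Ideal R, J.FG → I ≤ J → s.IsStarInvertible J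

/-- A maximal `⋆`-ideal is `⋆`-potent if it contains a `⋆`-rigid ideal. -/
def IsPotent (s : StarOp R) (M : Ideal R) : Prop :=
  s.IsMaxStarIdeal M ∧ ∃ I : Ideal R, s.IsRigid I ∧ I ≤ M

/-- A maximal `⋆`-ideal is `⋆`-super potent if it contains a `⋆`-super rigid ideal. -/
def IsSuperPotent (s : StarOp R) (M : Ideal R) : Prop :=
  s.IsMaxStarIdeal M ∧ ∃ I : Ideal R, s.IsSuperRigid I ∧ I ≤ M

/-- `R` is `⋆`-potent if every maximal `⋆`-ideal is `⋆`-potent. -/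
def PotentDomain (s : StarOp R) : Prop :=
  ∀ M : Ideal R, s.IsMaxStarIdeal M → s.IsPotent M

/-- `R` is `⋆`-super potent if every maximal `⋆`-ideal is `⋆`-super potent. -/
def SuperPotentDomain (s : StarOp R) : Prop :=
  ∀ M : Ideal R, s.IsMaxStarIdeal M → s.IsSuperPotent M

end StarOp

section TOperation

variable {R : Type*} [CommRing R] [IsDomain R]

/-- The `v`-operation `J ↦ (J⁻¹)⁻¹` on fractional ideals. -/
noncomputable def vOp (J : FracId R) : FracId R :=
  (1 : FracId R) / ((1 : FracId R) / J)

/-- The `t`-closure of a fractional ideal: the union of `J^v` over all nonzero finitely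
generated subideals `J` (realized as a submodule of the fraction field). -/
noncomputable def tOp (I : FracId R) : Submodule R (FractionRing R) :=
  ⨆ J ∈ {J : FracId R | J ≠ 0 ∧ (J : Submodule R (FractionRing R)).FG ∧ J ≤ I},
    ((vOp J : FracId R) : Submodule R (FractionRing R))

/-- A (nonzero integral) `t`-ideal. -/
def IsTIdeal (I : Ideal R) : Prop :=
  I ≠ ⊥ ∧ tOp (I : FracId R) = ((I : FracId R) : Submodule R (FractionRing R))

/-- A maximal `t`-ideal: maximal among proper integral `t`-ideals. -/
def IsMaxTIdeal (M : Ideal R) : Prop :=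
  M ≠ ⊤ ∧ IsTIdeal M ∧ ∀ J : Ideal R, J ≠ ⊤ → IsTIdeal J → M ≤ J → J = M

/-- A nonzero ideal `I` is `t`-invertible if `(I·I⁻¹)^t = R`. -/
def IsTInvertible (I : Ideal R) : Prop :=
  I ≠ ⊥ ∧ tOp ((I : FracId R) * ((1 : FracId R) / (I : FracId R))) =
    ((1 : FracId R) : Submodule R (FractionRing R))

/-- A nonzero finitely generated ideal is `t`-rigid if it is contained in exactly one maximal
`t`-ideal. -/
def IsTRigid (I : Ideal R) : Prop :=
  I ≠ ⊥ ∧ I.FG ∧ ∃! M : Ideal R, IsMaxTIdeal M ∧ I ≤ M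

/-- A `t`-rigid ideal is `t`-super rigid if every finitely generated ideal containing it is
`t`-invertible. -/
def IsTSuperRigid (I : Ideal R) : Prop :=
  IsTRigid I ∧ ∀ J : Ideal R, J.FG → I ≤ J → IsTInvertible J

/-- A maximal `t`-ideal is `t`-potent if it contains a `t`-rigid ideal. -/
def IsTPotent (M : Ideal R) : Prop :=
  IsMaxTIdeal M ∧ ∃ I : Ideal R, IsTRigid I ∧ I ≤ M

/-- A maximal `t`-ideal is `t`-super potent if it contains a `t`-super rigid ideal. -/
def IsTSuperPotent (M : Ideal R) : Prop :=
  IsMaxTIdeal M ∧ ∃ I : Ideal R, IsTSuperRigid I ∧ I ≤ M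

end TOperation

/-- `R` is `t`-potent if every maximal `t`-ideal is `t`-potent. -/
def TPotentDomain (R : Type*) [CommRing R] [IsDomain R] : Prop :=
  ∀ M : Ideal R, IsMaxTIdeal M → IsTPotent M

/-- `R` is `t`-super potent if every maximal `t`-ideal is `t`-super potent. -/
def TSuperPotentDomain (R : Type*) [CommRing R] [IsDomain R] : Prop :=
  ∀ M : Ideal R, IsMaxTIdeal M → IsTSuperPotent M

/-- An ideal is invertible if `I·I⁻¹ = R` (as fractional ideals). -/
def IsInvertibleIdeal {R : Type*} [CommRing R] [IsDomain R] (I : Ideal R) : Prop :=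
  I ≠ ⊥ ∧ (I : FracId R) * ((1 : FracId R) / (I : FracId R)) = 1

/-- An ideal `M` is `d`-super potent if it contains a nonzero finitely generated ideal `I`
such that every finitely generated ideal containing `I` is invertible. -/
def IsDSuperPotent {R : Type*} [CommRing R] [IsDomain R] (M : Ideal R) : Prop :=
  ∃ I : Ideal R, I ≠ ⊥ ∧ I.FG ∧ I ≤ M ∧ ∀ J : Ideal R, J.FG → I ≤ J → IsInvertibleIdeal J

/-- An ideal `P` is divided (`P = P R_P`): every `x ∈ P` is divisible, within `P`, by every
`s ∉ P`. -/
def IsDividedIdeal {R : Type*} [CommRing R] (P : Ideal R) : Prop :=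
  ∀ x ∈ P, ∀ s ∉ P, ∃ y ∈ P, x = s * y

/-- A divided prime ideal. -/
def IsDividedPrime {R : Type*} [CommRing R] (P : Ideal R) : Prop :=
  P.IsPrime ∧ IsDividedIdeal P

/-- A valuation domain: an integral domain in which, for any two elements, one divides the
other (equivalently, the ideals are totally ordered by inclusion). -/
def IsValuationDomain (A : Type*) [CommRing A] : Prop :=
  IsDomain A ∧ ∀ a b : A, a ∣ b ∨ b ∣ a

/-- A height-one prime: a nonzero prime ideal such that the only prime strictly below it
is `(0)`. -/
def HeightOnePrime {R : Type*} [CommRing R] (P : Ideal R) : Prop :=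
  P.IsPrime ∧ P ≠ ⊥ ∧ ∀ Q : Ideal R, Q.IsPrime → Q < P → Q = ⊥

/-- `R` has `t`-dimension one: every maximal `t`-ideal has height one. -/
def TDimensionOne (R : Type*) [CommRing R] [IsDomain R] : Prop :=
  ∀ M : Ideal R, IsMaxTIdeal M → HeightOnePrime M

/-- `R` is completely integrally closed: if `a ∈ R` is nonzero, `u` is in the fraction field,
and `a·uⁿ ∈ R` for all `n ≥ 1`, then `u ∈ R`. -/
def CompletelyIntegrallyClosed (R : Type*) [CommRing R] [IsDomain R] : Prop :=
  ∀ (a : R) (u : FractionRing R), a ≠ 0 →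
    (∀ n : ℕ, 0 < n → ∃ r : R, algebraMap R (FractionRing R) a * u ^ n =
      algebraMap R (FractionRing R) r) →
    ∃ r : R, algebraMap R (FractionRing R) r = u

/-- A Prüfer `v`-multiplication domain: every nonzero finitely generated ideal is
`t`-invertible. -/
def IsPvMD (R : Type*) [CommRing R] [IsDomain R] : Prop :=
  ∀ I : Ideal R, I ≠ ⊥ → I.FG → IsTInvertible I

/-- `x` (in the fraction field) belongs to the localization `R_P`, i.e. `x = r/s` with
`s ∉ P`. -/
def MemLocalizationAt {R : Type*} [CommRing R] [IsDomain R] (P : Ideal R)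
    (x : FractionRing R) : Prop :=
  ∃ r s : R, s ∉ P ∧ algebraMap R (FractionRing R) s * x = algebraMap R (FractionRing R) r

/-- An essential domain: `R` is an intersection (inside its fraction field) of localizations
at primes which are valuation domains. -/
def EssentialDomain (R : Type*) [CommRing R] [IsDomain R] : Prop :=
  ∃ 𝓟 : Set (Ideal R),
    (∀ P ∈ 𝓟, ∃ hP : P.IsPrime,
      IsValuationDomain (Localization (@Ideal.primeCompl R _ P hP))) ∧
    (∀ x : FractionRing R, (∀ P ∈ 𝓟, MemLocalizationAt P x) ↔
      ∃ r : R, algebraMap R (FractionRing R) r = x)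

/-- A generalized Krull domain: `R` is a locally finite intersection of essential rank-one
(height-one) valuation localizations. -/
def GeneralizedKrullDomain (R : Type*) [CommRing R] [IsDomain R] : Prop :=
  ∃ 𝓟 : Set (Ideal R),
    (∀ P ∈ 𝓟, ∃ hP : P.IsPrime, HeightOnePrime P ∧
      IsValuationDomain (Localization (@Ideal.primeCompl R _ P hP))) ∧
    (∀ x : FractionRing R, (∀ P ∈ 𝓟, MemLocalizationAt P x) ↔
      ∃ r : R, algebraMap R (FractionRing R) r = x) ∧
    (∀ a : R, a ≠ 0 → {P : Ideal R | P ∈ 𝓟 ∧ a ∈ P}.Finite)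

/-!
The maximal `t`-ideals of `R[X]` are the extensions `P[X]` of the maximal `t`-ideals `P` of `R`,
together with some ideals contracting to zero. The latter are always `t`-super potent: such an `N`
becomes principal, generated by some `f ∈ N`, once the nonzero constants are inverted, and it
contains a polynomial `g` whose content has `v`-closure `R`. No `P[X]` contains `g`, so `N` is the
only maximal `t`-ideal containing `(f, g)`, and a finitely generated `J` between `(f, g)` and `N`
satisfies `d J ⊆ (f)` for some constant `d ≠ 0`, whence `d / f ∈ J⁻¹` and `d ∈ J J⁻¹ ∖ N`.

For the extended ideals, `t`-(super) rigid ideals pass from `R` to `R[X]` by `I ↦ I[X]` and back by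
taking the ideal generated by all coefficients. A fractional ideal `(a / b) R` is represented by its
trace `(aR : b)` on `R`; these traces commute with extension, `(I : b)[X] = (I[X] : b)`, so
`t`-closures and `t`-invertibility are compared without leaving the integral ideals.
-/

section Closures

variable {R : Type*} [CommRing R]

/-- The `v`-closure of an integral ideal: the intersection of the ideals `(aR : b)` containing it.
In a domain `(aR : b)` is the trace on `R` of `(a / b) R`, so this is `J ↦ (J⁻¹)⁻¹` expressed inside
`R`; taking `a = 0` closes the zero ideal. -/
noncomputable def vClosure : ClosureOperator (Ideal R) :=
  .mk₂ (fun J => sInf {I | (∃ a b : R, (Ideal.span {a}).colon {b} = I) ∧ J ≤ I})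
    (fun _ => le_sInf fun _ hI => hI.2)
    (fun _ _ h => le_sInf fun _ hI => sInf_le ⟨hI.1, h.trans (sInf_le hI)⟩)

theorem mem_vClosure {J : Ideal R} {x : R} : x ∈ vClosure J ↔
    ∀ a b : R, J ≤ (Ideal.span {a}).colon {b} → x ∈ (Ideal.span {a}).colon {b} :=
  Submodule.mem_sInf.trans
    ⟨fun h a b hJ => h _ ⟨⟨a, b, rfl⟩, hJ⟩, by rintro h _ ⟨⟨a, b, rfl⟩, hJ⟩; exact h a b hJ⟩

theorem mem_span_singleton_of_vClosure_eq_top {J : Ideal R} (hJ : vClosure J = ⊤) {p r : R}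
    (h : J ≤ (Ideal.span {p}).colon {r}) : r ∈ Ideal.span {p} := by
  have h1 := mem_vClosure.1 ((Ideal.eq_top_iff_one _).1 hJ) p r h
  rwa [Submodule.mem_colon_singleton, one_smul] at h1

theorem vClosure_bot : vClosure (⊥ : Ideal R) = ⊥ :=
  le_bot_iff.1 fun x hx => by
    simpa [Submodule.mem_colon_singleton] using mem_vClosure.1 hx 0 1 bot_le

theorem span_singleton_mul_le_iff_le_colon {y : R} {J I : Ideal R} :
    Ideal.span {y} * J ≤ I ↔ J ≤ I.colon {y} := by
  rw [Ideal.span_singleton_mul_le_iff]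
  exact forall₂_congr fun z _ => by rw [Submodule.mem_colon_singleton, smul_eq_mul, mul_comm]

theorem colon_singleton_colon_singleton (I : Ideal R) (y z : R) :
    (I.colon {z}).colon {y} = I.colon {y * z} := by
  ext x
  simp only [Submodule.mem_colon_singleton, smul_eq_mul, mul_assoc]

theorem span_singleton_mul_vClosure_le (y : R) (J : Ideal R) :
    Ideal.span {y} * vClosure J ≤ vClosure (Ideal.span {y} * J) := by
  refine span_singleton_mul_le_iff_le_colon.2 fun x hx => ?_
  refine Submodule.mem_colon_singleton.2 (mem_vClosure.2 fun a b hJ => ?_)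
  rw [span_singleton_mul_le_iff_le_colon, colon_singleton_colon_singleton] at hJ
  have := mem_vClosure.1 hx a _ hJ
  rwa [← colon_singleton_colon_singleton, Submodule.mem_colon_singleton] at this

theorem directedOn_vClosure_image (I : Ideal R) :
    DirectedOn (· ≤ ·) (vClosure '' {J : Ideal R | J.FG ∧ J ≤ I}) := by
  rintro _ ⟨A, ⟨hA, hAI⟩, rfl⟩ _ ⟨B, ⟨hB, hBI⟩, rfl⟩
  exact ⟨_, ⟨A ⊔ B, ⟨Submodule.FG.sup hA hB, sup_le hAI hBI⟩, rfl⟩,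
    vClosure.monotone le_sup_left, vClosure.monotone le_sup_right⟩

theorem vClosure_image_nonempty (I : Ideal R) :
    (vClosure '' {J : Ideal R | J.FG ∧ J ≤ I}).Nonempty :=
  ⟨_, ⊥, ⟨Submodule.fg_bot, bot_le⟩, rfl⟩

theorem exists_fg_le_vClosure {J I : Ideal R} (hJ : J.FG)
    (h : J ≤ sSup (vClosure '' {A : Ideal R | A.FG ∧ A ≤ I})) :
    ∃ A : Ideal R, A.FG ∧ A ≤ I ∧ J ≤ vClosure A := by
  obtain ⟨_, ⟨A, ⟨hA, hAI⟩, rfl⟩, hJA⟩ := (Submodule.fg_iff_compact J).1 hJ _ _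
    (vClosure_image_nonempty I) (directedOn_vClosure_image I) (isLUB_sSup _) h
  exact ⟨A, hA, hAI, hJA⟩

/-- The `t`-closure of an integral ideal: the directed union of the `v`-closures of its finitely
generated subideals. -/
noncomputable def tClosure : ClosureOperator (Ideal R) :=
  .mk₂ (fun I => sSup (vClosure '' {J | J.FG ∧ J ≤ I}))
    (fun I x hx => by
      have hmem : Ideal.span {x} ∈ {J : Ideal R | J.FG ∧ J ≤ I} :=
        ⟨Submodule.fg_span_singleton x, (Ideal.span_singleton_le_iff_mem I).2 hx⟩
      exact le_sSup (Set.mem_image_of_mem vClosure hmem)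
        (vClosure.le_closure _ (Ideal.mem_span_singleton_self x)))
    (fun I J h => sSup_le <| by
      rintro _ ⟨A, ⟨hA, hAI⟩, rfl⟩
      obtain ⟨B, hB, hBJ, hAB⟩ := exists_fg_le_vClosure hA (hAI.trans h)
      exact (vClosure.closure_min hAB (vClosure.isClosed_closure B)).trans
        (le_sSup ⟨B, ⟨hB, hBJ⟩, rfl⟩))

theorem mem_tClosure {I : Ideal R} {x : R} :
    x ∈ tClosure I ↔ ∃ J : Ideal R, J.FG ∧ J ≤ I ∧ x ∈ vClosure J := by
  change x ∈ sSup (vClosure '' {J | J.FG ∧ J ≤ I}) ↔ _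
  rw [Submodule.mem_sSup_of_directed (vClosure_image_nonempty I) (directedOn_vClosure_image I)]
  simp only [Set.exists_mem_image, Set.mem_ofPred_eq, and_assoc]

theorem vClosure_le_tClosure {J I : Ideal R} (hJ : J.FG) (hJI : J ≤ I) :
    vClosure J ≤ tClosure I :=
  fun _ hx => mem_tClosure.2 ⟨J, hJ, hJI, hx⟩

theorem tClosure_eq_top_iff_exists_vClosure {I : Ideal R} :
    tClosure I = ⊤ ↔ ∃ J : Ideal R, J.FG ∧ J ≤ I ∧ vClosure J = ⊤ := by
  simp only [Ideal.eq_top_iff_one, mem_tClosure]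

theorem isClosed_tClosure_iff {I : Ideal R} :
    tClosure.IsClosed I ↔ ∀ J : Ideal R, J.FG → J ≤ I → vClosure J ≤ I := by
  rw [ClosureOperator.isClosed_iff_closure_le]
  exact ⟨fun h J hJ hJI x hx => h (mem_tClosure.2 ⟨J, hJ, hJI, hx⟩), fun h x hx =>
    let ⟨J, hJ, hJI, hxJ⟩ := mem_tClosure.1 hx
    h J hJ hJI hxJ⟩

theorem isClosed_tClosure_sSup {S : Set (Ideal R)} (hne : S.Nonempty) (hS : DirectedOn (· ≤ ·) S)
    (h : ∀ I ∈ S, tClosure.IsClosed I) : tClosure.IsClosed (sSup S) :=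
  isClosed_tClosure_iff.2 fun J hJ hJS =>
    let ⟨I, hI, hJI⟩ := (Submodule.fg_iff_compact J).1 hJ _ _ hne hS (isLUB_sSup S) hJS
    (isClosed_tClosure_iff.1 (h I hI) J hJ hJI).trans (le_sSup hI)

theorem isClosed_tClosure_colon_singleton {I : Ideal R} (hI : tClosure.IsClosed I) (y : R) :
    tClosure.IsClosed (I.colon {y}) := by
  refine isClosed_tClosure_iff.2 fun J hJ hJI => span_singleton_mul_le_iff_le_colon.1 ?_
  exact (span_singleton_mul_vClosure_le y J).trans <| isClosed_tClosure_iff.1 hI _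
    ((Submodule.fg_span_singleton y).mul hJ) (span_singleton_mul_le_iff_le_colon.2 hJI)

end Closures

/-- `J` is invertible at `Q`: some fraction `b / a` with `(b / a) J ⊆ R` satisfies `(b / a) J ⊈ Q`,
that is, `J J⁻¹ ⊈ Q`. The second condition excludes `a = 0`. -/
def IsInvertibleAt {R : Type*} [CommRing R] (J Q : Ideal R) : Prop :=
  ∃ a b : R, J ≤ (Ideal.span {a}).colon {b} ∧ ¬ J ≤ (Ideal.span {a} * Q).colon {b}

theorem isInvertibleAt_of_not_le {R : Type*} [CommRing R] {J Q : Ideal R} (h : ¬ J ≤ Q) :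
    IsInvertibleAt J Q :=
  ⟨1, 1, by simp, by simpa [SetLike.le_def, Submodule.mem_colon_singleton] using h⟩

section MaximalTIdeals

variable {R : Type*} [CommRing R] [IsDomain R]

theorem mul_div_mem_coeIdeal_iff {a b x : R} (ha : a ≠ 0) {Q : Ideal R} :
    algebraMap R (FractionRing R) b / algebraMap R (FractionRing R) a *
      algebraMap R (FractionRing R) x ∈ (Q : FracId R) ↔ x ∈ (Ideal.span {a} * Q).colon {b} := by
  have ha' : algebraMap R (FractionRing R) a ≠ 0 := by simpa using ha
  rw [mem_coeIdeal, Submodule.mem_colon_singleton, Ideal.mem_span_singleton_mul]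
  refine exists_congr fun q => and_congr_right fun _ => ?_
  rw [div_mul_eq_mul_div, eq_div_iff ha', ← map_mul, ← map_mul,
    (IsFractionRing.injective R (FractionRing R)).eq_iff, mul_comm q, smul_eq_mul, mul_comm b]

theorem div_mem_coeIdeal_div_iff {a b : R} (ha : a ≠ 0) {J Q : Ideal R} (hJ : J ≠ ⊥) :
    algebraMap R (FractionRing R) b / algebraMap R (FractionRing R) a ∈
      (Q : FracId R) / (J : FracId R) ↔ J ≤ (Ideal.span {a} * Q).colon {b} := by
  rw [mem_div_iff_of_ne_zero (coeIdeal_ne_zero.2 hJ)]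
  simp only [mem_coeIdeal, forall_exists_index, and_imp, forall_apply_eq_imp_iff₂]
  exact forall₂_congr fun j _ => (mem_coeIdeal _).symm.trans (mul_div_mem_coeIdeal_iff ha)

theorem div_mem_one_div_iff {a b : R} (ha : a ≠ 0) {J : Ideal R} (hJ : J ≠ ⊥) :
    algebraMap R (FractionRing R) b / algebraMap R (FractionRing R) a ∈
      (1 : FracId R) / (J : FracId R) ↔ J ≤ (Ideal.span {a}).colon {b} := by
  rw [← coeIdeal_top, div_mem_coeIdeal_div_iff ha hJ, Ideal.mul_top]

theorem one_le_one_div_coeIdeal {J : Ideal R} (hJ : J ≠ ⊥) :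
    (1 : FracId R) ≤ 1 / (J : FracId R) := by
  rw [le_div_iff_mul_le (coeIdeal_ne_zero.2 hJ), one_mul]
  exact coeIdeal_le_one

theorem mem_vOp_coeIdeal_iff {J : Ideal R} (hJ : J ≠ ⊥) {x : FractionRing R} :
    x ∈ vOp (J : FracId R) ↔ ∀ y ∈ (1 : FracId R) / (J : FracId R), x * y ∈ (1 : FracId R) := by
  refine mem_div_iff_of_ne_zero fun h => ?_
  simpa [h] using one_le_one_div_coeIdeal hJ

theorem algebraMap_mem_vOp_iff {J : Ideal R} (hJ : J ≠ ⊥) {x : R} :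
    algebraMap R (FractionRing R) x ∈ vOp (J : FracId R) ↔ x ∈ vClosure J := by
  have mem_one_iff {a b : R} (ha : a ≠ 0) : algebraMap R (FractionRing R) x *
      (algebraMap R (FractionRing R) b / algebraMap R (FractionRing R) a) ∈ (1 : FracId R) ↔
        x ∈ (Ideal.span {a}).colon {b} := by
    rw [mul_comm, ← coeIdeal_top, mul_div_mem_coeIdeal_iff ha, Ideal.mul_top]
  rw [mem_vOp_coeIdeal_iff hJ, mem_vClosure]
  refine ⟨fun h a b hab => ?_, fun h y hy => ?_⟩
  · rcases eq_or_ne a 0 with rfl | ha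
    · obtain ⟨j, hj, hj0⟩ := Submodule.exists_mem_ne_zero_of_ne_bot hJ
      have hb : b = 0 := by simpa [Submodule.mem_colon_singleton, hj0] using hab hj
      simp [hb]
    · exact (mem_one_iff ha).1 (h _ ((div_mem_one_div_iff ha hJ).2 hab))
  · obtain ⟨b, a, ha, rfl⟩ := IsFractionRing.div_surjective R y
    have ha := nonZeroDivisors.ne_zero ha
    exact (mem_one_iff ha).2 (h a b ((div_mem_one_div_iff ha hJ).1 hy))

theorem vOp_coeIdeal {J : Ideal R} (hJ : J ≠ ⊥) :
    vOp (J : FracId R) = (vClosure J : FracId R) := by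
  refine le_antisymm (fun x hx => ?_) fun x hx => ?_
  · obtain ⟨r, rfl⟩ : ∃ r, algebraMap R _ r = x := by
      simpa using (mem_vOp_coeIdeal_iff hJ).1 hx 1 (one_le_one_div_coeIdeal hJ (one_mem_one _))
    exact mem_coeIdeal_of_mem _ ((algebraMap_mem_vOp_iff hJ).1 hx)
  · obtain ⟨r, hr, rfl⟩ := (mem_coeIdeal _).1 hx
    exact (algebraMap_mem_vOp_iff hJ).2 hr

theorem tOp_coeIdeal (I : Ideal R) :
    tOp (I : FracId R) = ((tClosure I : FracId R) : Submodule R (FractionRing R)) := by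
  have inj := IsFractionRing.injective R (FractionRing R)
  refine le_antisymm (iSup₂_le fun J ⟨hJ0, hJfg, hJI⟩ => ?_) fun x hx => ?_
  · obtain ⟨A, rfl⟩ := le_one_iff_exists_coeIdeal.1 (hJI.trans coeIdeal_le_one)
    rw [coeIdeal_fg _ inj] at hJfg
    rw [coeIdeal_le_coeIdeal] at hJI
    rw [vOp_coeIdeal (coeIdeal_ne_zero.1 hJ0)]
    exact (coeIdeal_le_coeIdeal _).2 (vClosure_le_tClosure hJfg hJI)
  · obtain ⟨r, hr, rfl⟩ := (mem_coeIdeal _).1 hx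
    obtain ⟨J, hJ, hJI, hr⟩ := mem_tClosure.1 hr
    rcases eq_or_ne J ⊥ with rfl | hJ0
    · have hr0 : r = 0 := by simpa [vClosure_bot] using hr
      simp [hr0]
    · exact Submodule.mem_iSup_of_mem (J : FracId R) <| Submodule.mem_iSup_of_mem
        ⟨coeIdeal_ne_zero.2 hJ0, (coeIdeal_fg _ inj J).2 hJ, (coeIdeal_le_coeIdeal _).2 hJI⟩
        ((algebraMap_mem_vOp_iff hJ0).2 hr)

theorem isTIdeal_iff {I : Ideal R} : IsTIdeal I ↔ I ≠ ⊥ ∧ tClosure.IsClosed I := by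
  rw [IsTIdeal, tOp_coeIdeal, coeToSubmodule_inj, coeIdeal_inj]
  exact and_congr_right fun _ => tClosure.isClosed_iff.symm

theorem IsMaxTIdeal.ne_bot {M : Ideal R} (hM : IsMaxTIdeal M) : M ≠ ⊥ := hM.2.1.1

theorem IsMaxTIdeal.isClosed {M : Ideal R} (hM : IsMaxTIdeal M) : tClosure.IsClosed M :=
  (isTIdeal_iff.1 hM.2.1).2

theorem IsMaxTIdeal.eq_of_le_of_isClosed {M J : Ideal R} (hM : IsMaxTIdeal M) (hMJ : M ≤ J)
    (hJ : tClosure.IsClosed J) (hJtop : J ≠ ⊤) : J = M :=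
  hM.2.2 J hJtop (isTIdeal_iff.2 ⟨ne_bot_of_le_ne_bot hM.ne_bot hMJ, hJ⟩) hMJ

theorem IsMaxTIdeal.eq_of_le {M N : Ideal R} (hM : IsMaxTIdeal M) (hN : IsMaxTIdeal N)
    (h : M ≤ N) : N = M :=
  hM.2.2 N hN.1 hN.2.1 h

theorem IsMaxTIdeal.vClosure_ne_top {M J : Ideal R} (hM : IsMaxTIdeal M) (hJ : J.FG)
    (hJM : J ≤ M) : vClosure J ≠ ⊤ :=
  ne_top_of_le_ne_top hM.1 (isClosed_tClosure_iff.1 hM.isClosed J hJ hJM)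

theorem IsMaxTIdeal.isPrime {M : Ideal R} (hM : IsMaxTIdeal M) : M.IsPrime := by
  refine ⟨hM.1, fun {x y} hxy => or_iff_not_imp_right.2 fun hy => ?_⟩
  have hcolon : M.colon {y} = M :=
    hM.eq_of_le_of_isClosed Ideal.le_colon (isClosed_tClosure_colon_singleton hM.isClosed y)
      (by simpa [Submodule.colon_eq_top_iff_subset] using hy)
  rw [← hcolon]
  exact Submodule.mem_colon_singleton.2 hxy

theorem exists_isMaxTIdeal_le {I : Ideal R} (hI : I ≠ ⊥) (h : tClosure I ≠ ⊤) :
    ∃ M, IsMaxTIdeal M ∧ I ≤ M := by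
  obtain ⟨M, hIM, hM⟩ := zorn_le_nonempty₀ {J : Ideal R | J ≠ ⊤ ∧ tClosure.IsClosed J}
    (fun c hc hchain J hJ => ⟨sSup c,
      ⟨fun htop => by
        obtain ⟨A, hA, hAtop⟩ := (Submodule.fg_iff_compact ⊤).1 ⟨{1}, by simp⟩ _ _ ⟨J, hJ⟩
          hchain.directedOn (isLUB_sSup c) htop.ge
        exact (hc hA).1 (top_le_iff.1 hAtop),
        isClosed_tClosure_sSup ⟨J, hJ⟩ hchain.directedOn fun A hA => (hc hA).2⟩,
      fun _ => le_sSup⟩)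
    (tClosure I) ⟨h, tClosure.isClosed_closure I⟩
  have hIM := (tClosure.le_closure I).trans hIM
  exact ⟨M, ⟨hM.prop.1, isTIdeal_iff.2 ⟨ne_bot_of_le_ne_bot hI hIM, hM.prop.2⟩, fun J hJ hJt hMJ =>
    (hM.eq_of_le ⟨hJ, (isTIdeal_iff.1 hJt).2⟩ hMJ).symm⟩, hIM⟩

theorem tClosure_eq_top_iff {I : Ideal R} (hI : I ≠ ⊥) :
    tClosure I = ⊤ ↔ ∀ Q, IsMaxTIdeal Q → ¬ I ≤ Q := by
  refine ⟨fun h Q hQ hIQ => hQ.1 (top_le_iff.1 ?_), fun h => by_contra fun htop => ?_⟩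
  · exact h ▸ hQ.isClosed.closure_le_iff.2 hIQ
  · obtain ⟨M, hM, hIM⟩ := exists_isMaxTIdeal_le hI htop
    exact h M hM hIM

theorem mul_one_div_le_coeIdeal_iff {J Q : Ideal R} (hJ : J ≠ ⊥) :
    (J : FracId R) * ((1 : FracId R) / (J : FracId R)) ≤ (Q : FracId R) ↔
      ¬ IsInvertibleAt J Q := by
  rw [mul_comm, ← le_div_iff_mul_le (coeIdeal_ne_zero.2 hJ), IsInvertibleAt]
  push Not
  refine ⟨fun h a b hab => ?_, fun h y hy => ?_⟩
  · rcases eq_or_ne a 0 with rfl | ha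
    · simpa using hab
    · exact (div_mem_coeIdeal_div_iff ha hJ).1 (h ((div_mem_one_div_iff ha hJ).2 hab))
  · obtain ⟨b, a, ha, rfl⟩ := IsFractionRing.div_surjective R y
    have ha := nonZeroDivisors.ne_zero ha
    exact (div_mem_coeIdeal_div_iff ha hJ).2 (h a b ((div_mem_one_div_iff ha hJ).1 hy))

theorem isTInvertible_iff {J : Ideal R} :
    IsTInvertible J ↔ J ≠ ⊥ ∧ ∀ Q, IsMaxTIdeal Q → J ≤ Q → IsInvertibleAt J Q := by
  refine and_congr_right fun hJ => ?_
  obtain ⟨B, hB⟩ := le_one_iff_exists_coeIdeal.1 (mul_one_div_le_one (I := (J : FracId R)))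
  have hJB : J ≤ B := by
    rw [← coeIdeal_le_coeIdeal (FractionRing R), hB]
    exact le_self_mul_one_div coeIdeal_le_one
  rw [← hB, tOp_coeIdeal, coeToSubmodule_inj, coeIdeal_eq_one, Ideal.one_eq_top,
    tClosure_eq_top_iff (ne_bot_of_le_ne_bot hJ hJB)]
  refine forall₂_congr fun Q _ => ?_
  rw [← coeIdeal_le_coeIdeal (FractionRing R), hB, mul_one_div_le_coeIdeal_iff hJ, not_not]
  exact ⟨fun h _ => h, fun h => (em (J ≤ Q)).elim h isInvertibleAt_of_not_le⟩

end MaximalTIdeals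

section Polynomial

open Polynomial

variable {R : Type*} [CommRing R]

theorem contentIdeal_le_iff {f : R[X]} {Q : Ideal R} : f.contentIdeal ≤ Q ↔ f ∈ Q.map C := by
  rw [Ideal.mem_map_C_iff]
  refine ⟨fun h n => h (f.coeff_mem_contentIdeal n), fun h => Ideal.span_le.2 fun c hc => ?_⟩
  obtain ⟨n, -, rfl⟩ := mem_coeffs_iff.1 hc
  exact h n

theorem contentIdeal_add_X_pow_mul {f : R[X]} {k : ℕ} (hk : f.natDegree < k) (g : R[X]) :
    (f + X ^ k * g).contentIdeal = f.contentIdeal ⊔ g.contentIdeal := by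
  refine eq_of_forall_ge_iff fun Q => ?_
  simp only [sup_le_iff, contentIdeal_le_iff]
  refine ⟨fun h => ?_, fun ⟨hf, hg⟩ => add_mem hf (Ideal.mul_mem_left _ _ hg)⟩
  have hf : f ∈ Q.map C := Ideal.mem_map_C_iff.2 fun n => by
    rcases lt_or_ge n k with hn | hn
    · simpa [coeff_X_pow_mul', hn.not_ge] using Ideal.mem_map_C_iff.1 h n
    · simp [coeff_eq_zero_of_natDegree_lt (hk.trans_le hn)]
  refine ⟨hf, Ideal.mem_map_C_iff.2 fun n => ?_⟩
  rw [← coeff_X_pow_mul g k n]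
  exact Ideal.mem_map_C_iff.1 ((Ideal.add_mem_iff_right _ hf).1 h) _

/-- The ideal of `R` generated by the coefficients of all members of an ideal of `R[X]`; it is the
least `Q` with `N ≤ Q[X]`. -/
noncomputable def coeffIdeal (N : Ideal R[X]) : Ideal R :=
  sSup (contentIdeal '' (N : Set R[X]))

theorem coeffIdeal_le_iff {N : Ideal R[X]} {Q : Ideal R} : coeffIdeal N ≤ Q ↔ N ≤ Q.map C := by
  rw [coeffIdeal, sSup_le_iff, Set.forall_mem_image]
  exact forall₂_congr fun f _ => contentIdeal_le_iff

theorem le_map_C_coeffIdeal (N : Ideal R[X]) : N ≤ (coeffIdeal N).map C :=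
  coeffIdeal_le_iff.1 le_rfl

theorem coeffIdeal_ne_bot {N : Ideal R[X]} (hN : N ≠ ⊥) : coeffIdeal N ≠ ⊥ := fun h =>
  hN <| le_bot_iff.1 <| (le_map_C_coeffIdeal N).trans (by rw [h, Ideal.map_bot])

theorem coeffIdeal_span (S : Finset R[X]) :
    coeffIdeal (Ideal.span (S : Set R[X])) = S.sup contentIdeal := by
  refine eq_of_forall_ge_iff fun Q => ?_
  rw [coeffIdeal_le_iff, Ideal.span_le, Finset.sup_le_iff]
  exact forall₂_congr fun f _ => contentIdeal_le_iff.symm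

theorem coeffIdeal_fg {J : Ideal R[X]} (hJ : J.FG) : (coeffIdeal J).FG := by
  obtain ⟨S, rfl⟩ := hJ
  rw [coeffIdeal_span]
  exact Submodule.fg_finset_sup S _ fun f _ => f.contentIdeal_FG

theorem exists_mem_le_contentIdeal {N : Ideal R[X]} {J : Ideal R} (hJ : J.FG)
    (h : J ≤ coeffIdeal N) : ∃ f ∈ N, J ≤ f.contentIdeal := by
  have hdir : DirectedOn (· ≤ ·) (contentIdeal '' (N : Set R[X])) := by
    rintro _ ⟨f, hf, rfl⟩ _ ⟨g, hg, rfl⟩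
    refine ⟨_, ⟨f + X ^ (f.natDegree + 1) * g, N.add_mem hf (N.mul_mem_left _ hg), rfl⟩, ?_⟩
    rw [contentIdeal_add_X_pow_mul (Nat.lt_succ_self _)]
    exact ⟨le_sup_left, le_sup_right⟩
  obtain ⟨_, ⟨f, hf, rfl⟩, hJf⟩ := (Submodule.fg_iff_compact J).1 hJ _ _
    (Set.Nonempty.image _ ⟨0, N.zero_mem⟩) hdir (isLUB_sSup _) h
  exact ⟨f, hf, hJf⟩

theorem map_C_le_map_C_iff {I Q : Ideal R} : I.map C ≤ Q.map C ↔ I ≤ Q := by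
  refine ⟨fun h x hx => ?_, fun h => Ideal.map_mono h⟩
  simpa using Ideal.mem_map_C_iff.1 (h (Ideal.mem_map_of_mem C hx)) 0

theorem map_C_eq_bot_iff {I : Ideal R} : I.map C = ⊥ ↔ I = ⊥ :=
  Ideal.map_eq_bot_iff_of_injective C_injective

theorem map_C_ne_top {Q : Ideal R} (hQ : Q ≠ ⊤) : Q.map C ≠ ⊤ := by
  rw [← Ideal.map_top C]
  exact fun h => hQ (top_le_iff.1 (map_C_le_map_C_iff.1 h.ge))

theorem C_mem_map_C_colon_singleton_iff {I : Ideal R} {x : R} {g : R[X]} :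
    C x ∈ (I.map C).colon {g} ↔ ∀ n, x ∈ I.colon {g.coeff n} := by
  simp only [Submodule.mem_colon_singleton, smul_eq_mul, Ideal.mem_map_C_iff, coeff_C_mul]

theorem map_C_colon_singleton (I : Ideal R) (b : R) :
    (I.colon {b}).map C = (I.map C).colon {C b} := by
  ext f
  simp only [Submodule.mem_colon_singleton, smul_eq_mul, Ideal.mem_map_C_iff, coeff_mul_C]

theorem map_C_span_singleton_mul (a : R) (P : Ideal R) :
    (Ideal.span {a} * P).map C = Ideal.span {C a} * P.map C := by
  rw [Ideal.map_mul, Ideal.map_span, Set.image_singleton]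

theorem map_C_span_singleton (a : R) : (Ideal.span {a}).map C = Ideal.span {C a} := by
  rw [Ideal.map_span, Set.image_singleton]

theorem vClosure_map_C_le (A : Ideal R) : vClosure (A.map C) ≤ (vClosure A).map C := by
  refine fun f hf => Ideal.mem_map_C_iff.2 fun n => mem_vClosure.2 fun a b hA => ?_
  have hAC : A.map C ≤ (Ideal.span {C a}).colon {C b} := by
    rw [← map_C_span_singleton, ← map_C_colon_singleton]
    exact Ideal.map_mono hA
  have hfC := mem_vClosure.1 hf _ _ hAC
  rw [← map_C_span_singleton, ← map_C_colon_singleton] at hfC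
  exact Ideal.mem_map_C_iff.1 hfC n

theorem isClosed_tClosure_map_C {P : Ideal R} (hP : tClosure.IsClosed P) :
    tClosure.IsClosed (P.map C) :=
  isClosed_tClosure_iff.2 fun J hJ hJP => calc
    vClosure J ≤ vClosure ((coeffIdeal J).map C) := vClosure.monotone (le_map_C_coeffIdeal J)
    _ ≤ (vClosure (coeffIdeal J)).map C := vClosure_map_C_le _
    _ ≤ P.map C := Ideal.map_mono <|
      isClosed_tClosure_iff.1 hP _ (coeffIdeal_fg hJ) (coeffIdeal_le_iff.2 hJP)

theorem mem_map_C_of_mul_mem_map_C {I : Ideal R} {f g : R[X]}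
    (hf : ∀ r, f.contentIdeal ≤ I.colon {r} → r ∈ I) (h : g * f ∈ I.map C) : g ∈ I.map C := by
  have hker (q : R[X]) : q ∈ I.map C ↔ q.map (Ideal.Quotient.mk I) = 0 := by
    rw [← coe_mapRingHom, ← RingHom.mem_ker, ker_mapRingHom, Ideal.mk_ker]
  -- McCoy: it suffices that no nonzero constant of `R ⧸ I` kills `f`.
  have hreg : f.map (Ideal.Quotient.mk I) ∈ nonZeroDivisors (R ⧸ I)[X] := by
    refine Polynomial.mem_nonZeroDivisors_iff.2 fun s hs => ?_
    obtain ⟨r, rfl⟩ := Ideal.Quotient.mk_surjective s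
    refine Ideal.Quotient.eq_zero_iff_mem.2 (hf r (contentIdeal_le_iff.2 ?_))
    rwa [map_C_colon_singleton, Submodule.mem_colon_singleton, hker, smul_eq_mul, mul_comm,
      Polynomial.map_mul, map_C, ← smul_eq_C_mul]
  rw [hker, Polynomial.map_mul] at h
  exact (hker g).2 ((mul_right_mem_nonZeroDivisors_eq_zero_iff hreg).1 h)

theorem exists_mem_vClosure_contentIdeal_eq_top {N : Ideal R[X]}
    (h : tClosure (coeffIdeal N) = ⊤) : ∃ f ∈ N, vClosure f.contentIdeal = ⊤ := by
  obtain ⟨J, hJ, hJN, hJtop⟩ := tClosure_eq_top_iff_exists_vClosure.1 h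
  obtain ⟨f, hf, hJf⟩ := exists_mem_le_contentIdeal hJ hJN
  exact ⟨f, hf, top_le_iff.1 (hJtop ▸ vClosure.monotone hJf)⟩

theorem IsInvertibleAt.of_coeffIdeal {J : Ideal R[X]} {P : Ideal R}
    (h : IsInvertibleAt (coeffIdeal J) P) : IsInvertibleAt J (P.map C) := by
  obtain ⟨a, b, hab, hP⟩ := h
  rw [coeffIdeal_le_iff, map_C_colon_singleton] at hab hP
  exact ⟨C a, C b, map_C_span_singleton a ▸ hab, map_C_span_singleton_mul a P ▸ hP⟩

end Polynomial

section PolynomialDomain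

open Polynomial

theorem exists_colon_singleton_eq {A : Type*} [CommRing A] [IsDomain A] {a b c : A} (hc : c ≠ 0)
    (h : c ∈ (Ideal.span {a}).colon {b}) :
    ∃ g, ∀ N, (Ideal.span {a} * N).colon {b} = (Ideal.span {c} * N).colon {g} := by
  obtain ⟨g, hg⟩ := Ideal.mem_span_singleton.1 (Submodule.mem_colon_singleton.1 h)
  rw [smul_eq_mul] at hg
  rcases eq_or_ne a 0 with rfl | ha
  · have hb : b = 0 := by simpa [hc] using hg
    exact ⟨0, fun N => by simp [hb, Submodule.colon_singleton_zero]⟩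
  refine ⟨g, fun N => ?_⟩
  ext x
  simp only [Submodule.mem_colon_singleton, Ideal.mem_span_singleton_mul, smul_eq_mul]
  refine exists_congr fun n => and_congr_right fun _ => ⟨fun hn => ?_, fun hn => ?_⟩
  · exact mul_left_cancel₀ ha (by linear_combination c * hn + x * hg)
  · exact mul_left_cancel₀ hc (by linear_combination a * hn - x * hg)

variable {R : Type*} [CommRing R] [IsDomain R]

theorem vClosure_span_C_pair_eq_top {p : R} (hp : p ≠ 0) {f : R[X]}
    (hf : vClosure f.contentIdeal = ⊤) : vClosure (Ideal.span {C p, f}) = ⊤ := by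
  refine (Ideal.eq_top_iff_one _).2 (mem_vClosure.2 fun a b hab => ?_)
  rw [Ideal.span_le, Set.insert_subset_iff, Set.singleton_subset_iff] at hab
  obtain ⟨g, hg⟩ := exists_colon_singleton_eq (C_ne_zero.2 hp) hab.1
  have hg : (Ideal.span {a}).colon {b} = (Ideal.span {C p}).colon {g} := by
    simpa only [Ideal.mul_top] using hg ⊤
  rw [hg, ← map_C_span_singleton] at hab ⊢
  have hfg := Submodule.mem_colon_singleton.1 hab.2
  refine Submodule.mem_colon_singleton.2 ?_
  rw [one_smul]
  refine mem_map_C_of_mul_mem_map_C (fun r => mem_span_singleton_of_vClosure_eq_top hf)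
    (f := f) ?_
  rwa [mul_comm]

theorem exists_isMaxTIdeal_le_map_C {N : Ideal R[X]} (hN0 : N ≠ ⊥)
    (h : tClosure (coeffIdeal N) ≠ ⊤) : ∃ Q, IsMaxTIdeal Q ∧ N ≤ Q.map C := by
  obtain ⟨Q, hQ, hNQ⟩ := exists_isMaxTIdeal_le (coeffIdeal_ne_bot hN0) h
  exact ⟨Q, hQ, coeffIdeal_le_iff.1 hNQ⟩

theorem exists_isMaxTIdeal_le_map_C_of_C_mem {N : Ideal R[X]} (hN : N ≠ ⊤)
    (hNt : tClosure.IsClosed N) {p : R} (hp : p ≠ 0) (hpN : C p ∈ N) :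
    ∃ Q, IsMaxTIdeal Q ∧ N ≤ Q.map C := by
  refine exists_isMaxTIdeal_le_map_C ((Submodule.ne_bot_iff N).2 ⟨_, hpN, C_ne_zero.2 hp⟩)
    fun h => hN (top_le_iff.1 ?_)
  obtain ⟨f, hfN, hf⟩ := exists_mem_vClosure_contentIdeal_eq_top h
  rw [← vClosure_span_C_pair_eq_top hp hf]
  exact isClosed_tClosure_iff.1 hNt _ (Submodule.fg_span (Set.toFinite _))
    (Ideal.span_le.2 (Set.pair_subset hpN hfN))

theorem IsMaxTIdeal.map_C {P : Ideal R} (hP : IsMaxTIdeal P) : IsMaxTIdeal (P.map C) := by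
  refine ⟨map_C_ne_top hP.1, isTIdeal_iff.2 ⟨map_C_eq_bot_iff.not.2 hP.ne_bot,
    isClosed_tClosure_map_C hP.isClosed⟩, fun N hN hNt hPN => hPN.antisymm' ?_⟩
  obtain ⟨p, hp, hp0⟩ := Submodule.exists_mem_ne_zero_of_ne_bot hP.ne_bot
  obtain ⟨Q, hQ, hNQ⟩ := exists_isMaxTIdeal_le_map_C_of_C_mem hN (isTIdeal_iff.1 hNt).2 hp0
    (hPN (Ideal.mem_map_of_mem C hp))
  rwa [← hP.eq_of_le hQ (map_C_le_map_C_iff.1 (hPN.trans hNQ))]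

theorem IsMaxTIdeal.exists_eq_map_C {N : Ideal R[X]} (hN : IsMaxTIdeal N)
    (h : N.comap C ≠ ⊥) : ∃ P, IsMaxTIdeal P ∧ N = P.map C := by
  obtain ⟨p, hpN, hp⟩ := Submodule.exists_mem_ne_zero_of_ne_bot h
  obtain ⟨Q, hQ, hNQ⟩ := exists_isMaxTIdeal_le_map_C_of_C_mem hN.1 hN.isClosed hp hpN
  exact ⟨Q, hQ, (hN.eq_of_le hQ.map_C hNQ).symm⟩

theorem IsMaxTIdeal.exists_eq_map_C_of_map_C_le {N : Ideal R[X]} (hN : IsMaxTIdeal N)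
    {I : Ideal R} (hI : I ≠ ⊥) (h : I.map C ≤ N) : ∃ P, IsMaxTIdeal P ∧ N = P.map C :=
  hN.exists_eq_map_C (ne_bot_of_le_ne_bot hI (Ideal.map_le_iff_le_comap.1 h))

theorem IsMaxTIdeal.exists_mem_vClosure_contentIdeal_eq_top {N : Ideal R[X]} (hN : IsMaxTIdeal N)
    (h : N.comap C = ⊥) : ∃ g ∈ N, vClosure g.contentIdeal = ⊤ := by
  refine _root_.exists_mem_vClosure_contentIdeal_eq_top (by_contra fun htop => ?_)
  obtain ⟨Q, hQ, hNQ⟩ := exists_isMaxTIdeal_le_map_C hN.ne_bot htop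
  rw [← hN.eq_of_le hQ.map_C hNQ] at h
  exact hQ.ne_bot (le_bot_iff.1 (h ▸ Ideal.le_comap_map))

end PolynomialDomain

section Localization

variable {A : Type*} [CommRing A]

theorem exists_mem_forall_mem_colon_singleton (M : Submonoid A)
    (S : Type*) [CommRing S] [Algebra A S] [IsLocalization M S] [IsPrincipalIdealRing S]
    (I : Ideal A) : ∃ f ∈ I, ∀ x ∈ I, ∃ m ∈ M, x ∈ (Ideal.span {f}).colon {m} := by
  obtain ⟨s, hs⟩ := IsPrincipalIdealRing.principal (I.map (algebraMap A S))
  have hsI : s ∈ I.map (algebraMap A S) := hs ▸ Submodule.mem_span_singleton_self s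
  obtain ⟨⟨f, m⟩, hfm⟩ := (IsLocalization.mem_map_algebraMap_iff M S).1 hsI
  refine ⟨f, f.2, fun x hx => ?_⟩
  have hxf : algebraMap A S x ∈ (Ideal.span {(f : A)}).map (algebraMap A S) := by
    rw [Ideal.map_span, Set.image_singleton, ← hfm,
      Ideal.span_singleton_mul_right_unit (IsLocalization.map_units S m)]
    exact hs.le (Ideal.mem_map_of_mem (algebraMap A S) hx)
  obtain ⟨m, hm, hmx⟩ := (IsLocalization.algebraMap_mem_map_algebraMap_iff M S _ x).1 hxf
  exact ⟨m, hm, Submodule.mem_colon_singleton.2 (by rwa [smul_eq_mul, mul_comm])⟩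

theorem exists_le_colon_singleton_of_fg (M : Submonoid A) {I J : Ideal A}
    (hJ : J.FG) (h : ∀ x ∈ J, ∃ m ∈ M, x ∈ I.colon {m}) : ∃ m ∈ M, J ≤ I.colon {m} := by
  induction J, hJ using Submodule.fg_induction with
  | singleton x =>
    obtain ⟨m, hm, hx⟩ := h x (Submodule.mem_span_singleton_self x)
    exact ⟨m, hm, (Submodule.span_singleton_le_iff_mem _ _).2 hx⟩
  | sup J₁ J₂ _ _ ih₁ ih₂ =>
    obtain ⟨m, hm, h₁⟩ := ih₁ fun x hx => h x (Submodule.mem_sup_left hx)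
    obtain ⟨n, hn, h₂⟩ := ih₂ fun x hx => h x (Submodule.mem_sup_right hx)
    refine ⟨n * m, M.mul_mem hn hm, sup_le ?_ ?_⟩
    · exact (h₁.trans Ideal.le_colon).trans (colon_singleton_colon_singleton I n m).le
    · exact (h₂.trans Ideal.le_colon).trans
        (mul_comm m n ▸ colon_singleton_colon_singleton I m n).le

theorem le_of_forall_mem_colon_singleton {M : Submonoid A} {I Q : Ideal A} [hQ : Q.IsPrime]
    (hMQ : Disjoint (M : Set A) (Q : Set A)) {f : A} (hfQ : f ∈ Q)
    (h : ∀ x ∈ I, ∃ m ∈ M, x ∈ (Ideal.span {f}).colon {m}) : I ≤ Q := fun x hx => by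
  obtain ⟨m, hm, hxm⟩ := h x hx
  have hxmQ := (Ideal.span_singleton_le_iff_mem Q).2 hfQ (Submodule.mem_colon_singleton.1 hxm)
  exact (hQ.mem_or_mem hxmQ).resolve_right (Set.disjoint_left.1 hMQ hm)

theorem isInvertibleAt_of_forall_mem_colon_singleton [IsDomain A] {M : Submonoid A} {J Q : Ideal A}
    (hMQ : Disjoint (M : Set A) (Q : Set A)) (hJ : J.FG) {f : A} (hf : f ≠ 0) (hfJ : f ∈ J)
    (h : ∀ x ∈ J, ∃ m ∈ M, x ∈ (Ideal.span {f}).colon {m}) : IsInvertibleAt J Q := by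
  obtain ⟨m, hm, hJm⟩ := exists_le_colon_singleton_of_fg M hJ h
  refine ⟨f, m, hJm, fun hJQ => Set.disjoint_left.1 hMQ hm ?_⟩
  obtain ⟨q, hq, hqm⟩ := Ideal.mem_span_singleton_mul.1 (Submodule.mem_colon_singleton.1 (hJQ hfJ))
  rwa [← mul_left_cancel₀ hf hqm]

end Localization

section UpperToZero

open Polynomial

theorem disjoint_map_C_nonZeroDivisors {R : Type*} [CommRing R] [Nontrivial R] {Q : Ideal R[X]}
    (h : Q.comap C = ⊥) :
    Disjoint ((nonZeroDivisors R).map (C : R →+* R[X]) : Set R[X]) (Q : Set R[X]) := by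
  refine Set.disjoint_left.2 ?_
  rintro _ ⟨d, hd, rfl⟩ hdQ
  exact nonZeroDivisors.ne_zero hd (Ideal.mem_bot.1 (h ▸ Ideal.mem_comap.2 hdQ))

variable {R : Type*} [CommRing R] [IsDomain R]

attribute [local instance] Polynomial.algebra Polynomial.isLocalization in
theorem exists_mem_forall_mem_colon_C (N : Ideal R[X]) : ∃ f ∈ N, ∀ x ∈ N,
    ∃ m ∈ (nonZeroDivisors R).map (C : R →+* R[X]), x ∈ (Ideal.span {f}).colon {m} :=
  exists_mem_forall_mem_colon_singleton _ (FractionRing R)[X] N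

theorem IsMaxTIdeal.comap_C_eq_bot_of_mem {Q : Ideal R[X]} (hQ : IsMaxTIdeal Q) {g : R[X]}
    (hg : vClosure g.contentIdeal = ⊤) (hgQ : g ∈ Q) : Q.comap C = ⊥ := by
  by_contra h
  obtain ⟨P, hP, rfl⟩ := hQ.exists_eq_map_C h
  exact hP.vClosure_ne_top g.contentIdeal_FG (contentIdeal_le_iff.2 hgQ) hg

theorem IsMaxTIdeal.exists_isTSuperRigid_le {N : Ideal R[X]} (hN : IsMaxTIdeal N)
    (h : N.comap C = ⊥) : ∃ I, IsTSuperRigid I ∧ I ≤ N := by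
  obtain ⟨f, hfN, hf⟩ := exists_mem_forall_mem_colon_C N
  obtain ⟨g, hgN, hg⟩ := hN.exists_mem_vClosure_contentIdeal_eq_top h
  have hf0 : f ≠ 0 := by
    rintro rfl
    exact hN.ne_bot (le_bot_iff.1 (le_of_forall_mem_colon_singleton
      (disjoint_map_C_nonZeroDivisors (Ideal.comap_bot_of_injective C C_injective))
      (Ideal.mem_bot.2 rfl) hf))
  have hle {J : Ideal R[X]} : Ideal.span {f, g} ≤ J ↔ f ∈ J ∧ g ∈ J := by
    rw [Ideal.span_le, Set.pair_subset_iff, SetLike.mem_coe, SetLike.mem_coe]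
  have eq_of_le {Q : Ideal R[X]} (hQ : IsMaxTIdeal Q) (hIQ : Ideal.span {f, g} ≤ Q) : Q = N := by
    have hQ0 := hQ.comap_C_eq_bot_of_mem hg (hle.1 hIQ).2
    have := hQ.isPrime
    exact hN.eq_of_le hQ (le_of_forall_mem_colon_singleton
      (disjoint_map_C_nonZeroDivisors hQ0) (hle.1 hIQ).1 hf)
  have ne_bot {J : Ideal R[X]} (hJ : Ideal.span {f, g} ≤ J) : J ≠ ⊥ :=
    (Submodule.ne_bot_iff J).2 ⟨f, (hle.1 hJ).1, hf0⟩
  have hIN : Ideal.span {f, g} ≤ N := hle.2 ⟨hfN, hgN⟩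
  refine ⟨Ideal.span {f, g}, ⟨⟨ne_bot le_rfl, Submodule.fg_span (Set.toFinite _), N, ⟨hN, hIN⟩,
    fun Q hQ => eq_of_le hQ.1 hQ.2⟩, fun J hJ hIJ => ?_⟩, hIN⟩
  refine isTInvertible_iff.2 ⟨ne_bot hIJ, fun Q hQ hJQ => ?_⟩
  obtain rfl := eq_of_le hQ (hIJ.trans hJQ)
  exact isInvertibleAt_of_forall_mem_colon_singleton (disjoint_map_C_nonZeroDivisors h) hJ hf0
    (hle.1 hIJ).1 fun x hx => hf x (hJQ hx)

end UpperToZero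

section Transfer

open Polynomial

variable {R : Type*} [CommRing R] [IsDomain R]

theorem IsInvertibleAt.of_map_C {J P : Ideal R} (hJ : J ≠ ⊥)
    (h : IsInvertibleAt (J.map C) (P.map C)) : IsInvertibleAt J P := by
  obtain ⟨a, b, hab, hP⟩ := h
  obtain ⟨c, hcJ, hc⟩ := Submodule.exists_mem_ne_zero_of_ne_bot hJ
  obtain ⟨g, hg⟩ := exists_colon_singleton_eq (C_ne_zero.2 hc) (hab (Ideal.mem_map_of_mem C hcJ))
  have hspan : (Ideal.span {a}).colon {b} = (Ideal.span {C c}).colon {g} := by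
    simpa only [Ideal.mul_top] using hg ⊤
  rw [hspan, ← map_C_span_singleton] at hab
  rw [hg, ← map_C_span_singleton_mul] at hP
  obtain ⟨x, hxJ, hx⟩ := SetLike.not_le_iff_exists.1 (Ideal.map_le_iff_le_comap.not.1 hP)
  obtain ⟨k, hk⟩ := not_forall.1 (C_mem_map_C_colon_singleton_iff.not.1 hx)
  exact ⟨c, g.coeff k, fun y hy =>
    C_mem_map_C_colon_singleton_iff.1 (hab (Ideal.mem_map_of_mem C hy)) k, fun h => hk (h hxJ)⟩

theorem IsTInvertible.of_map_C {J : Ideal R} (h : IsTInvertible (J.map C)) : IsTInvertible J := by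
  obtain ⟨hJ, hinv⟩ := isTInvertible_iff.1 h
  rw [Ne, map_C_eq_bot_iff] at hJ
  exact isTInvertible_iff.2 ⟨hJ, fun P hP hJP =>
    .of_map_C hJ (hinv _ hP.map_C (Ideal.map_mono hJP))⟩

theorem IsTRigid.map_C {I : Ideal R} (hI : IsTRigid I) : IsTRigid (I.map C) := by
  obtain ⟨hI0, hIfg, P, ⟨hP, hIP⟩, hunique⟩ := hI
  refine ⟨map_C_eq_bot_iff.not.2 hI0, hIfg.map C, P.map C, ⟨hP.map_C, Ideal.map_mono hIP⟩, ?_⟩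
  rintro N ⟨hN, hIN⟩
  obtain ⟨Q, hQ, rfl⟩ := hN.exists_eq_map_C_of_map_C_le hI0 hIN
  rw [hunique Q ⟨hQ, map_C_le_map_C_iff.1 hIN⟩]

theorem IsTRigid.coeffIdeal {I : Ideal R[X]} (hI : IsTRigid I) {P : Ideal R} (hP : IsMaxTIdeal P)
    (hIP : I ≤ P.map C) : IsTRigid (coeffIdeal I) := by
  obtain ⟨hI0, hIfg, hunique⟩ := hI
  refine ⟨coeffIdeal_ne_bot hI0, coeffIdeal_fg hIfg, P, ⟨hP, coeffIdeal_le_iff.2 hIP⟩, ?_⟩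
  rintro Q ⟨hQ, hIQ⟩
  have hmap := hunique.unique ⟨hQ.map_C, coeffIdeal_le_iff.1 hIQ⟩ ⟨hP.map_C, hIP⟩
  exact (map_C_le_map_C_iff.1 hmap.le).antisymm (map_C_le_map_C_iff.1 hmap.ge)

theorem IsTSuperRigid.map_C {I : Ideal R} (hI : IsTSuperRigid I) : IsTSuperRigid (I.map C) := by
  refine ⟨hI.1.map_C, fun J hJ hIJ => ?_⟩
  have hI0 := hI.1.1
  have hIJ' : I ≤ _root_.coeffIdeal J := map_C_le_map_C_iff.1 (hIJ.trans (le_map_C_coeffIdeal J))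
  have hinv := (isTInvertible_iff.1 (hI.2 _ (coeffIdeal_fg hJ) hIJ')).2
  refine isTInvertible_iff.2 ⟨ne_bot_of_le_ne_bot (map_C_eq_bot_iff.not.2 hI0) hIJ, ?_⟩
  intro N hN hJN
  obtain ⟨P, hP, rfl⟩ := hN.exists_eq_map_C_of_map_C_le hI0 (hIJ.trans hJN)
  exact .of_coeffIdeal (hinv P hP (coeffIdeal_le_iff.2 hJN))

theorem IsTSuperRigid.coeffIdeal {I : Ideal R[X]} (hI : IsTSuperRigid I) {P : Ideal R}
    (hP : IsMaxTIdeal P) (hIP : I ≤ P.map C) : IsTSuperRigid (coeffIdeal I) :=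
  ⟨hI.1.coeffIdeal hP hIP, fun _ hJ hIJ =>
    .of_map_C (hI.2 _ (hJ.map C) (coeffIdeal_le_iff.1 hIJ))⟩

theorem IsTPotent.map_C {P : Ideal R} (hP : IsTPotent P) : IsTPotent (P.map C) :=
  let ⟨hmax, _, hI, hIP⟩ := hP
  ⟨hmax.map_C, _, hI.map_C, Ideal.map_mono hIP⟩

theorem IsTSuperPotent.map_C {P : Ideal R} (hP : IsTSuperPotent P) : IsTSuperPotent (P.map C) :=
  let ⟨hmax, _, hI, hIP⟩ := hP
  ⟨hmax.map_C, _, hI.map_C, Ideal.map_mono hIP⟩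

theorem IsTSuperPotent.isTPotent {P : Ideal R} (hP : IsTSuperPotent P) : IsTPotent P :=
  let ⟨hmax, I, hI, hIP⟩ := hP
  ⟨hmax, I, hI.1, hIP⟩

theorem IsMaxTIdeal.isTSuperPotent_of_comap_C_eq_bot {N : Ideal R[X]} (hN : IsMaxTIdeal N)
    (h : N.comap C = ⊥) : IsTSuperPotent N :=
  ⟨hN, hN.exists_isTSuperRigid_le h⟩

theorem TPotentDomain.polynomial (hR : TPotentDomain R) : TPotentDomain R[X] := by
  intro N hN
  by_cases h : N.comap C = ⊥
  · exact (hN.isTSuperPotent_of_comap_C_eq_bot h).isTPotent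
  · obtain ⟨P, hP, rfl⟩ := hN.exists_eq_map_C h
    exact (hR P hP).map_C

theorem TSuperPotentDomain.polynomial (hR : TSuperPotentDomain R) : TSuperPotentDomain R[X] := by
  intro N hN
  by_cases h : N.comap C = ⊥
  · exact hN.isTSuperPotent_of_comap_C_eq_bot h
  · obtain ⟨P, hP, rfl⟩ := hN.exists_eq_map_C h
    exact (hR P hP).map_C

theorem TPotentDomain.of_polynomial (hR : TPotentDomain R[X]) : TPotentDomain R := fun P hP =>
  let ⟨_, I, hI, hIP⟩ := hR (P.map C) hP.map_C
  ⟨hP, coeffIdeal I, hI.coeffIdeal hP hIP, coeffIdeal_le_iff.2 hIP⟩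

theorem TSuperPotentDomain.of_polynomial (hR : TSuperPotentDomain R[X]) :
    TSuperPotentDomain R := fun P hP =>
  let ⟨_, I, hI, hIP⟩ := hR (P.map C) hP.map_C
  ⟨hP, coeffIdeal I, hI.coeffIdeal hP hIP, coeffIdeal_le_iff.2 hIP⟩

end Transfer

/-- `R` is `t`-potent iff `R[X]` is `t`-potent, and `R` is `t`-super potent iff
`R[X]` is `t`-super potent. -/
theorem tPotent_polynomial_iff {R : Type*} [CommRing R] [IsDomain R] :
    (TPotentDomain R ↔ TPotentDomain (Polynomial R)) ∧
    (TSuperPotentDomain R ↔ TSuperPotentDomain (Polynomial R)) := by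
  exact ⟨⟨.polynomial, .of_polynomial⟩, ⟨.polynomial, .of_polynomial⟩⟩
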